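/- Let m₀ ∈ (0,1], let T(m₀) be the unique solution in [1/2,2] of |m₀| = (2T−1)²(T+4)/(27T), and fix T > T(m₀). For m ∈ [0,m₀] denote by M₁(m) < M₂(m) < M₃(m) the three real solutions of T²M³ + T(2−T)M|M| + (1−2T)M = m, and write M₊ = M₃(0) > 0 and M₋ = M₁(0) = −M₊. Then: (i) on [0,m₀] the map m ↦ M₃(m) is strictly increasing, m ↦ M₂(m) is strictly decreasing, and m ↦ M₁(m) is strictly increasing; (ii) for every m ∈ (0,m₀] one has M₃(m) > M₊ = |M₋| > |M₁(m)| > |M₂(m)| > 0. -/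

import Mathlib

/-!
Write the equation as `f M = m` with `f x = a x³ + b x|x| + c x`, where `a > 0 > c`. On the positive
axis `f x / x² = a x + b + c / x` increases, so `f` is strictly increasing wherever it is
nonnegative; hence for `m ≥ 0` there is at most one positive solution, and it increases with `m`.
On the negative axis `f` is a cubic. If it takes the same value at `x < y ≤ 0`, then by Vieta the
third root of that level is positive, so `f` exceeds that level on `(x, y)` and nowhere else on
`(-∞, 0]`. Thus `f` takes no value three times there, and raising `m` moves the two nonpositive
solutions strictly towards each other. At `m = 0` the solutions are symmetric because `f` is odd.
-/

open Set

/-- The left-hand side of the consistency equation, with arbitrary coefficients: the equation with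
horizon `T` is `oddCubic (T ^ 2) (T * (2 - T)) (1 - 2 * T) M = m`. -/
def oddCubic (a b c x : ℝ) : ℝ := a * x ^ 3 + b * x * |x| + c * x

section oddCubic

variable {a b c x y z : ℝ}

theorem oddCubic_zero : oddCubic a b c 0 = 0 := by
  simp [oddCubic]

theorem oddCubic_neg : oddCubic a b c (-x) = -oddCubic a b c x := by
  rw [oddCubic, oddCubic, abs_neg]
  ring

theorem oddCubic_of_nonneg (hx : 0 ≤ x) : oddCubic a b c x = a * x ^ 3 + b * x ^ 2 + c * x := by
  rw [oddCubic, abs_of_nonneg hx]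
  ring

theorem oddCubic_of_nonpos (hx : x ≤ 0) : oddCubic a b c x = a * x ^ 3 - b * x ^ 2 + c * x := by
  rw [oddCubic, abs_of_nonpos hx]
  ring

theorem strictMonoOn_oddCubic (ha : 0 ≤ a) (hc : c < 0) :
    StrictMonoOn (oddCubic a b c) {x | 0 < x ∧ 0 ≤ oddCubic a b c x} := by
  rintro x ⟨hx, -⟩ y ⟨hy, hfy⟩ hxy
  have cross : oddCubic a b c x * y ^ 2 < oddCubic a b c y * x ^ 2 := by
    have hc' : 0 < -c := neg_pos.2 hc
    have factor_pos : 0 < (y - x) * (x * y * (a * (x * y) + -c)) :=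
      mul_pos (sub_pos.2 hxy) (by positivity)
    rw [oddCubic_of_nonneg hx.le, oddCubic_of_nonneg hy.le]
    linear_combination factor_pos
  have : oddCubic a b c x * y ^ 2 < oddCubic a b c y * y ^ 2 :=
    cross.trans_le (by gcongr)
  exact lt_of_mul_lt_mul_right this (sq_nonneg y)

theorem exists_pos_oddCubic_sub_eq (ha : 0 < a) (hc : c < 0) (hxy : x < y) (hy : y ≤ 0)
    (h : oddCubic a b c x = oddCubic a b c y) :
    ∃ w > 0, ∀ z ≤ 0,
      oddCubic a b c z - oddCubic a b c x = a * ((z - x) * (y - z) * (w - z)) := by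
  have hx : x < 0 := hxy.trans_le hy
  obtain ⟨w, sum_roots⟩ : ∃ w, a * (x + y + w) = b := ⟨b / a - (x + y), by field_simp; ring⟩
  have sum_pairs : a * (x * y + (x + y) * w) = c := by
    rw [oddCubic_of_nonpos hx.le, oddCubic_of_nonpos hy] at h
    apply mul_left_cancel₀ (sub_ne_zero.2 hxy.ne)
    linear_combination -h + (x - y) * (x + y) * sum_roots
  have hw : 0 < w := by
    have : (x + y) * w < 0 := by
      have : 0 ≤ x * y := mul_nonneg_of_nonpos_of_nonpos hx.le hy
      have : x * y + (x + y) * w < 0 := neg_of_mul_neg_right (sum_pairs.trans_lt hc) ha.le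
      linarith
    exact pos_of_mul_neg_right this (by linarith)
  refine ⟨w, hw, fun z hz => ?_⟩
  rw [oddCubic_of_nonpos hz, oddCubic_of_nonpos hx.le]
  linear_combination (z ^ 2 - x ^ 2) * sum_roots - (z - x) * sum_pairs

theorem oddCubic_lt_iff_mem_Ioo (ha : 0 < a) (hc : c < 0) (hxy : x < y) (hy : y ≤ 0)
    (h : oddCubic a b c x = oddCubic a b c y) (hz : z ≤ 0) :
    oddCubic a b c x < oddCubic a b c z ↔ z ∈ Ioo x y := by
  obtain ⟨w, hw, factor⟩ := exists_pos_oddCubic_sub_eq ha hc hxy hy h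
  have hzw : 0 < w - z := by linarith
  rw [← sub_pos, factor z hz, mul_pos_iff_of_pos_left ha, mul_pos_iff_of_pos_right hzw]
  constructor
  · intro hpos
    rcases mul_pos_iff.1 hpos with ⟨hxz, hzy⟩ | ⟨hzx, hyz⟩
    · exact ⟨sub_pos.1 hxz, sub_pos.1 hzy⟩
    · linarith
  · rintro ⟨hxz, hzy⟩
    exact mul_pos (sub_pos.2 hxz) (sub_pos.2 hzy)

theorem oddCubic_eq_iff_eq_or_eq (ha : 0 < a) (hc : c < 0) (hxy : x < y) (hy : y ≤ 0)
    (h : oddCubic a b c x = oddCubic a b c y) (hz : z ≤ 0) :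
    oddCubic a b c z = oddCubic a b c x ↔ z = x ∨ z = y := by
  obtain ⟨w, hw, factor⟩ := exists_pos_oddCubic_sub_eq ha hc hxy hy h
  have hzw : w - z ≠ 0 := by linarith
  rw [← sub_eq_zero, factor z hz]
  simp only [mul_eq_zero, ha.ne', hzw, sub_eq_zero, false_or, or_false, eq_comm (a := y)]

end oddCubic

/-- `x₁ < x₂ < x₃` are three solutions of `oddCubic a b c x = m`, not necessarily all of them. -/
structure IsSolutionTriple (a b c m x₁ x₂ x₃ : ℝ) : Prop where
  lt₁₂ : x₁ < x₂
  lt₂₃ : x₂ < x₃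
  eq₁ : oddCubic a b c x₁ = m
  eq₂ : oddCubic a b c x₂ = m
  eq₃ : oddCubic a b c x₃ = m

namespace IsSolutionTriple

variable {a b c m m' x₁ x₂ x₃ y₁ y₂ y₃ : ℝ}

theorem third_pos (h : IsSolutionTriple a b c m x₁ x₂ x₃) (ha : 0 < a) (hc : c < 0) : 0 < x₃ := by
  by_contra! hx₃
  rcases (oddCubic_eq_iff_eq_or_eq ha hc h.lt₁₂ (h.lt₂₃.le.trans hx₃) (h.eq₁.trans h.eq₂.symm)
    hx₃).1 (h.eq₃.trans h.eq₁.symm) with h₃₁ | h₃₂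
  · exact (h.lt₁₂.trans h.lt₂₃).ne' h₃₁
  · exact h.lt₂₃.ne' h₃₂

theorem second_nonpos (h : IsSolutionTriple a b c m x₁ x₂ x₃) (ha : 0 ≤ a) (hc : c < 0)
    (hm : 0 ≤ m) : x₂ ≤ 0 := by
  by_contra! hx₂
  exact h.lt₂₃.ne <| (strictMonoOn_oddCubic ha hc).injOn ⟨hx₂, h.eq₂ ▸ hm⟩
    ⟨hx₂.trans h.lt₂₃, h.eq₃ ▸ hm⟩ (h.eq₂.trans h.eq₃.symm)

theorem second_neg (h : IsSolutionTriple a b c m x₁ x₂ x₃) (ha : 0 ≤ a) (hc : c < 0)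
    (hm : 0 < m) : x₂ < 0 := by
  refine (h.second_nonpos ha hc hm.le).lt_of_ne ?_
  rintro rfl
  exact hm.ne (oddCubic_zero.symm.trans h.eq₂)

theorem third_lt_third (h : IsSolutionTriple a b c m x₁ x₂ x₃)
    (h' : IsSolutionTriple a b c m' y₁ y₂ y₃) (ha : 0 < a) (hc : c < 0) (hm : 0 ≤ m)
    (hmm' : m < m') : x₃ < y₃ := by
  refine ((strictMonoOn_oddCubic ha.le hc).lt_iff_lt ⟨h.third_pos ha hc, h.eq₃ ▸ hm⟩
    ⟨h'.third_pos ha hc, h'.eq₃ ▸ hm.trans hmm'.le⟩).1 ?_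
  rwa [h.eq₃, h'.eq₃]

theorem mem_Ioo_of_lt_oddCubic {z : ℝ} (h : IsSolutionTriple a b c m x₁ x₂ x₃) (ha : 0 < a)
    (hc : c < 0) (hm : 0 ≤ m) (hz : z ≤ 0) (hmz : m < oddCubic a b c z) : z ∈ Ioo x₁ x₂ :=
  (oddCubic_lt_iff_mem_Ioo ha hc h.lt₁₂ (h.second_nonpos ha.le hc hm) (h.eq₁.trans h.eq₂.symm)
    hz).1 (h.eq₁.trans_lt hmz)

theorem second_lt_second (h : IsSolutionTriple a b c m x₁ x₂ x₃)
    (h' : IsSolutionTriple a b c m' y₁ y₂ y₃) (ha : 0 < a) (hc : c < 0) (hm : 0 ≤ m)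
    (hmm' : m < m') : y₂ < x₂ :=
  (h.mem_Ioo_of_lt_oddCubic ha hc hm (h'.second_nonpos ha.le hc (hm.trans hmm'.le))
    (hmm'.trans_eq h'.eq₂.symm)).2

theorem first_lt_first (h : IsSolutionTriple a b c m x₁ x₂ x₃)
    (h' : IsSolutionTriple a b c m' y₁ y₂ y₃) (ha : 0 < a) (hc : c < 0) (hm : 0 ≤ m)
    (hmm' : m < m') : x₁ < y₁ :=
  (h.mem_Ioo_of_lt_oddCubic ha hc hm
    (h'.lt₁₂.le.trans (h'.second_nonpos ha.le hc (hm.trans hmm'.le)))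
    (hmm'.trans_eq h'.eq₁.symm)).1

theorem first_eq_neg_third (h : IsSolutionTriple a b c 0 x₁ x₂ x₃) (ha : 0 < a) (hc : c < 0) :
    x₁ = -x₃ := by
  have hx₃ : -x₃ < 0 := neg_neg_of_pos (h.third_pos ha hc)
  have hx₁ : x₁ < 0 := h.lt₁₂.trans_le (h.second_nonpos ha.le hc le_rfl)
  have eq_neg : oddCubic a b c (-x₃) = oddCubic a b c x₁ := by
    rw [oddCubic_neg, h.eq₁, h.eq₃, neg_zero]
  rcases (oddCubic_eq_iff_eq_or_eq ha hc hx₁ le_rfl (h.eq₁.trans oddCubic_zero.symm)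
    hx₃.le).1 eq_neg with h₃₁ | h₃
  · exact h₃₁.symm
  · exact absurd h₃ hx₃.ne

end IsSolutionTriple

theorem stmt_15_general {a b c m₀ : ℝ} (ha : 0 < a) (hc : c < 0) (hm₀ : 0 ≤ m₀)
    {M1 M2 M3 : ℝ → ℝ}
    (hM : ∀ m ∈ Icc 0 m₀, IsSolutionTriple a b c m (M1 m) (M2 m) (M3 m)) :
    StrictMonoOn M3 (Icc 0 m₀) ∧
    StrictAntiOn M2 (Icc 0 m₀) ∧
    StrictMonoOn M1 (Icc 0 m₀) ∧
    0 < M3 0 ∧ M1 0 = -(M3 0) ∧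
    (∀ m ∈ Ioc 0 m₀,
      M3 0 < M3 m ∧ |M1 m| < M3 0 ∧ |M2 m| < |M1 m| ∧ 0 < |M2 m|) := by
  have zero_mem : (0 : ℝ) ∈ Icc 0 m₀ := left_mem_Icc.2 hm₀
  have mono₃ : StrictMonoOn M3 (Icc 0 m₀) := fun m hm m' hm' hlt =>
    (hM m hm).third_lt_third (hM m' hm') ha hc hm.1 hlt
  have anti₂ : StrictAntiOn M2 (Icc 0 m₀) := fun m hm m' hm' hlt =>
    (hM m hm).second_lt_second (hM m' hm') ha hc hm.1 hlt
  have mono₁ : StrictMonoOn M1 (Icc 0 m₀) := fun m hm m' hm' hlt =>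
    (hM m hm).first_lt_first (hM m' hm') ha hc hm.1 hlt
  have symm₀ : M1 0 = -(M3 0) := (hM 0 zero_mem).first_eq_neg_third ha hc
  refine ⟨mono₃, anti₂, mono₁, (hM 0 zero_mem).third_pos ha hc, symm₀, fun m hm => ?_⟩
  have hm' : m ∈ Icc 0 m₀ := Ioc_subset_Icc_self hm
  have hM₂ : M2 m < 0 := (hM m hm').second_neg ha.le hc hm.1
  have hM₁₂ : M1 m < M2 m := (hM m hm').lt₁₂
  have hM₁ : -(M3 0) < M1 m := symm₀ ▸ mono₁ zero_mem hm' hm.1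
  rw [abs_of_neg hM₂, abs_of_neg (hM₁₂.trans hM₂)]
  exact ⟨mono₃ zero_mem hm' hm.1, neg_lt.1 hM₁, neg_lt_neg hM₁₂, neg_pos.2 hM₂⟩

/-- Let `m₀ ∈ (0,1]`, `Tm = T(m₀)` the unique solution in `[1/2,2]` of
`|m₀| = (2T−1)²(T+4)/(27T)`, and `T > Tm`. For `m ∈ [0,m₀]` let
`M₁(m) < M₂(m) < M₃(m)` be the three real solutions of
`T²M³ + T(2−T)M|M| + (1−2T)M = m`. Then on `[0,m₀]` the map `M₃` is strictly
increasing, `M₂` strictly decreasing, `M₁` strictly increasing; moreover, with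
`M₊ = M₃(0) > 0` and `M₋ = M₁(0) = −M₊`, for every `m ∈ (0,m₀]` one has
`M₃(m) > M₊ = |M₋| > |M₁(m)| > |M₂(m)| > 0`. -/
theorem stmt_15 (m₀ Tm T : ℝ) (hm₀ : m₀ ∈ Set.Ioc (0:ℝ) 1)
    (hTm : Tm ∈ Set.Icc (1/2 : ℝ) 2 ∧ |m₀| = (2*Tm - 1)^2 * (Tm + 4) / (27*Tm))
    (hT : Tm < T)
    (M1 M2 M3 : ℝ → ℝ)
    (hroots : ∀ m ∈ Set.Icc (0:ℝ) m₀,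
      M1 m < M2 m ∧ M2 m < M3 m ∧
      (T^2 * (M1 m)^3 + T*(2 - T) * (M1 m) * |M1 m| + (1 - 2*T) * (M1 m) = m) ∧
      (T^2 * (M2 m)^3 + T*(2 - T) * (M2 m) * |M2 m| + (1 - 2*T) * (M2 m) = m) ∧
      (T^2 * (M3 m)^3 + T*(2 - T) * (M3 m) * |M3 m| + (1 - 2*T) * (M3 m) = m) ∧
      (∀ M : ℝ, T^2 * M^3 + T*(2 - T) * M * |M| + (1 - 2*T) * M = m →
        M = M1 m ∨ M = M2 m ∨ M = M3 m)) :
    StrictMonoOn M3 (Set.Icc 0 m₀) ∧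
    StrictAntiOn M2 (Set.Icc 0 m₀) ∧
    StrictMonoOn M1 (Set.Icc 0 m₀) ∧
    0 < M3 0 ∧ M1 0 = -(M3 0) ∧
    (∀ m ∈ Set.Ioc (0:ℝ) m₀,
      M3 0 < M3 m ∧ |M1 m| < M3 0 ∧ |M2 m| < |M1 m| ∧ 0 < |M2 m|) := by
  have T_gt_half : 1 / 2 < T := hTm.1.1.trans_lt hT
  exact stmt_15_general (by positivity) (by linarith) hm₀.1.le fun m hm =>
    let ⟨h₁₂, h₂₃, h₁, h₂, h₃, _⟩ := hroots m hm; ⟨h₁₂, h₂₃, h₁, h₂, h₃⟩
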